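/- Let G be a groupoid over a set Q, let k ≥ 3, and let Ψ: 𝔾^k → 𝔾^k be a map satisfying the morphism properties. Then for every k-gon [g] = (g₁, …, g_k) ∈ 𝔾^k one has Ψ([g]⁻¹) = (Ψ([g]))⁻¹, where the inverse of a k-gon is defined by (g₁, …, g_k)⁻¹ = (g_k⁻¹, g_{k−1}⁻¹, …, g₁⁻¹). (This is the paper's corollary to the correspondence between maps on 𝔾^k with the morphism properties and groupoid endomorphisms.) -/

import Mathlib

/-- A groupoid over a set `Q`, with set of arrows `A`: composition is modeled as a
total operation whose axioms are imposed only on composable pairs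
(`tgt g = src h`). -/
structure DiscGroupoid (A : Type*) (Q : Type*) where
  src : A → Q
  tgt : A → Q
  id : Q → A
  comp : A → A → A
  inv : A → A
  src_id : ∀ x, src (id x) = x
  tgt_id : ∀ x, tgt (id x) = x
  src_comp : ∀ g h, tgt g = src h → src (comp g h) = src g
  tgt_comp : ∀ g h, tgt g = src h → tgt (comp g h) = tgt h
  comp_assoc : ∀ g h k, tgt g = src h → tgt h = src k →
    comp (comp g h) k = comp g (comp h k)
  id_comp : ∀ g, comp (id (src g)) g = g
  comp_id : ∀ g, comp g (id (tgt g)) = g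
  src_inv : ∀ g, src (inv g) = tgt g
  tgt_inv : ∀ g, tgt (inv g) = src g
  inv_comp : ∀ g, comp (inv g) g = id (tgt g)
  comp_inv : ∀ g, comp g (inv g) = id (src g)

/-- The cyclic successor of an index `i` in `Fin k`. -/
def nextIdx {k : ℕ} (i : Fin k) : Fin k := ⟨(i.val + 1) % k, Nat.mod_lt _ i.pos⟩

/-- `g = (g₁, …, g_k)` is a `k`-gon in the groupoid `G`: consecutive components
are composable cyclically (`tgt gᵢ = src gᵢ₊₁`, indices mod `k`) and the product
`g₁ · g₂ ⋯ g_k` equals the identity arrow `1_{src g₁}`. -/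
def DiscGroupoid.IsGon {A Q : Type*} (G : DiscGroupoid A Q) {k : ℕ}
    (g : Fin k → A) : Prop :=
  (∀ i : Fin k, G.tgt (g i) = G.src (g (nextIdx i))) ∧
  ∀ hpos : 0 < k,
    (List.ofFn g).foldl G.comp (G.id (G.src (g ⟨0, hpos⟩))) =
      G.id (G.src (g ⟨0, hpos⟩))

/-- The discrete jet space `𝔾^k`: the set of `k`-gons of the groupoid `G`. -/
def DiscGroupoid.Gon {A Q : Type*} (G : DiscGroupoid A Q) (k : ℕ) :=
  {g : Fin k → A // G.IsGon g}

/-- The inverse of a `k`-tuple of arrows: `(g₁, …, g_k)⁻¹ = (g_k⁻¹, …, g₁⁻¹)`,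
i.e. the `i`-th component of the inverse is `(g_{k+1-i})⁻¹`. -/
def DiscGroupoid.invTuple {A Q : Type*} (G : DiscGroupoid A Q) {k : ℕ}
    (g : Fin k → A) : Fin k → A :=
  fun i => G.inv (g i.rev)

/-- The constant tuple of identity arrows at a point is a `k`-gon. -/
theorem DiscGroupoid.isGon_const_id {A Q : Type*} (G : DiscGroupoid A Q)
    {k : ℕ} (x : Q) : G.IsGon (fun _ : Fin k => G.id x) := by
  have hxx : G.comp (G.id x) (G.id x) = G.id x := by
    have h := G.id_comp (G.id x)
    rwa [G.src_id] at h
  constructor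
  · intro i
    rw [G.tgt_id, G.src_id]
  · intro hpos
    have key : ∀ l : List A, (∀ a ∈ l, a = G.id x) →
        l.foldl G.comp (G.id x) = G.id x := by
      intro l
      induction l with
      | nil => intro _; rfl
      | cons a t ih =>
        intro hmem
        have ha : a = G.id x := hmem a (by simp)
        rw [List.foldl_cons, ha, hxx]
        exact ih fun b hb => hmem b (by simp [hb])
    simp only [G.src_id]
    exact key _ (by
      intro a ha
      simp only [List.mem_ofFn] at ha
      obtain ⟨i, hi⟩ := ha
      exact hi.symm)

/-- The map `α̂⁽ⁱ⁾ : 𝔾^k → 𝔾^k` sending a `k`-gon `[g]` to the constant `k`-gon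
`(1_{α(gᵢ)}, …, 1_{α(gᵢ)})`. -/
def DiscGroupoid.alphaHat {A Q : Type*} (G : DiscGroupoid A Q) {k : ℕ}
    (i : Fin k) (g : G.Gon k) : G.Gon k :=
  ⟨fun _ => G.id (G.src (g.1 i)), G.isGon_const_id _⟩

/-- A map `Ψ : 𝔾^k → 𝔾^k` satisfies the morphism properties if
(I) `Ψ ∘ α̂⁽ⁱ⁾ = α̂⁽ⁱ⁾ ∘ Ψ` for every `i`, and (II) whenever two `k`-gons have an
equal component, their images have the corresponding components equal. -/
def MorphismProps {A Q : Type*} (G : DiscGroupoid A Q) {k : ℕ}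
    (Ψ : G.Gon k → G.Gon k) : Prop :=
  (∀ (i : Fin k) (g : G.Gon k), Ψ (G.alphaHat i g) = G.alphaHat i (Ψ g)) ∧
  (∀ (g h : G.Gon k) (l m : Fin k), g.1 l = h.1 m → (Ψ g).1 l = (Ψ h).1 m)

theorem nextIdx_eq_add_one {n : ℕ} (i : Fin (n + 1)) : nextIdx i = i + 1 := by
  ext
  simp [nextIdx, Fin.val_add]

namespace DiscGroupoid

variable {A Q : Type*} (G : DiscGroupoid A Q)

theorem eq_inv_of_comp_eq_id {a b : A} (hab : G.tgt a = G.src b)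
    (hcomp : G.comp a b = G.id (G.src a)) : b = G.inv a :=
  calc b = G.comp (G.comp (G.inv a) a) b := by rw [G.inv_comp, hab, G.id_comp]
    _ = G.comp (G.inv a) (G.comp a b) := G.comp_assoc _ _ _ (G.tgt_inv a) hab
    _ = G.inv a := by rw [hcomp, ← G.tgt_inv, G.comp_id]

theorem inv_id (x : Q) : G.inv (G.id x) = G.id x := by
  refine (G.eq_inv_of_comp_eq_id ?_ ?_).symm
  · rw [G.tgt_id, G.src_id]
  · simpa only [G.src_id] using G.id_comp (G.id x)

theorem foldl_comp_replicate_id (a : A) (n : ℕ) :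
    (List.replicate n (G.id (G.tgt a))).foldl G.comp a = a := by
  induction n with
  | zero => rfl
  | succ n ih => rw [List.replicate_succ, List.foldl_cons, G.comp_id, ih]

theorem IsGon.eq_id_of_fin_one {G : DiscGroupoid A Q} {g : Fin 1 → A} (hg : G.IsGon g)
    (i : Fin 1) : g i = G.id (G.src (g i)) := by
  rw [Subsingleton.elim i 0]
  calc g 0 = G.comp (G.id (G.src (g 0))) (g 0) := (G.id_comp _).symm
    _ = G.id (G.src (g 0)) := by simpa using hg.2 one_pos

/-- The tuple `(a, b, 1_{α(a)}, …, 1_{α(a)})` of length `n + 2`, which extends a pair of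
arrows to a tuple of prescribed length. It is defined for all `a` and `b`, composable or not. -/
def padPair (n : ℕ) (a b : A) : Fin (n + 2) → A :=
  Fin.cons a (Fin.cons b fun _ => G.id (G.src a))

theorem eq_padPair {n : ℕ} {f : Fin (n + 2) → A}
    (hf : ∀ i : Fin n, f i.succ.succ = G.id (G.src (f 0))) :
    f = G.padPair n (f 0) (f 1) := by
  funext i
  refine Fin.cases rfl (fun j => ?_) i
  exact Fin.cases rfl hf j

theorem src_padPair_of_ne_one {n : ℕ} (a b : A) {i : Fin (n + 2)} (hi : i ≠ 1) :
    G.src (G.padPair n a b i) = G.src a := by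
  induction i using Fin.cases with
  | zero => rfl
  | succ j =>
    induction j using Fin.cases with
    | zero => exact absurd rfl hi
    | succ _ => exact G.src_id _

theorem padPair_composable_iff (n : ℕ) (a b : A) :
    (∀ i, G.tgt (G.padPair n a b i) = G.src (G.padPair n a b (nextIdx i))) ↔
      G.tgt a = G.src b ∧ G.tgt b = G.src a := by
  have src_next {i : Fin (n + 2)} (hi : i ≠ 0) :
      G.src (G.padPair n a b (i + 1)) = G.src a :=
    G.src_padPair_of_ne_one a b (by simpa using hi)
  have next_zero : G.padPair n a b (0 + 1) = b := by rw [zero_add]; rfl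
  simp only [nextIdx_eq_add_one]
  constructor
  · intro h
    exact ⟨(h 0).trans (congrArg G.src next_zero), (h 1).trans (src_next one_ne_zero)⟩
  · rintro ⟨hab, hba⟩ i
    induction i using Fin.cases with
    | zero => exact hab.trans (congrArg G.src next_zero.symm)
    | succ j =>
      rw [src_next j.succ_ne_zero]
      induction j using Fin.cases with
      | zero => exact hba
      | succ _ => exact G.tgt_id _

theorem foldl_comp_padPair (n : ℕ) {a b : A} (hab : G.tgt a = G.src b)
    (hba : G.tgt b = G.src a) :
    (List.ofFn (G.padPair n a b)).foldl G.comp (G.id (G.src a)) = G.comp a b := by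
  have htgt : G.src a = G.tgt (G.comp a b) := by rw [G.tgt_comp a b hab, hba]
  rw [padPair, List.ofFn_cons, List.ofFn_cons, List.ofFn_const, List.foldl_cons,
    List.foldl_cons, G.id_comp, htgt, G.foldl_comp_replicate_id]

theorem isGon_padPair_iff {n : ℕ} {a b : A} : G.IsGon (G.padPair n a b) ↔ b = G.inv a := by
  constructor
  · rintro ⟨hcomposable, hprod⟩
    obtain ⟨hab, hba⟩ := (G.padPair_composable_iff n a b).1 hcomposable
    exact G.eq_inv_of_comp_eq_id hab
      ((G.foldl_comp_padPair n hab hba).symm.trans (hprod (Nat.succ_pos _)))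
  · rintro rfl
    have hab : G.tgt a = G.src (G.inv a) := (G.src_inv a).symm
    have hba : G.tgt (G.inv a) = G.src a := G.tgt_inv a
    exact ⟨(G.padPair_composable_iff n a _).2 ⟨hab, hba⟩,
      fun _ => (G.foldl_comp_padPair n hab hba).trans (G.comp_inv a)⟩

end DiscGroupoid

namespace MorphismProps

variable {A Q : Type*} {G : DiscGroupoid A Q}

theorem map_apply_eq_id {k : ℕ} {Ψ : G.Gon k → G.Gon k} (hΨ : MorphismProps G Ψ) (g : G.Gon k)
    {l m : Fin k} (hlm : g.1 l = G.id (G.src (g.1 m))) :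
    (Ψ g).1 l = G.id (G.src ((Ψ g).1 m)) :=
  calc (Ψ g).1 l = (Ψ (G.alphaHat m g)).1 l := hΨ.2 g (G.alphaHat m g) l l hlm
    _ = (G.alphaHat m (Ψ g)).1 l := by rw [hΨ.1]
    _ = G.id (G.src ((Ψ g).1 m)) := rfl

theorem map_padPair_inv {n : ℕ} {Ψ : G.Gon (n + 2) → G.Gon (n + 2)} (hΨ : MorphismProps G Ψ)
    {a : A} {p : G.Gon (n + 2)} (hp : p.1 = G.padPair n a (G.inv a)) :
    (Ψ p).1 1 = G.inv ((Ψ p).1 0) := by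
  have hpad : (Ψ p).1 = G.padPair n ((Ψ p).1 0) ((Ψ p).1 1) :=
    G.eq_padPair fun i => hΨ.map_apply_eq_id p (by rw [hp]; rfl)
  exact G.isGon_padPair_iff.1 (hpad ▸ (Ψ p).2)

end MorphismProps

/-- By (II) an arrow `a` and its inverse may be followed inside the single `k`-gon
`(a, a⁻¹, 1, …, 1)`. By (I) and (II) its image has the same shape `(p, q, 1, …, 1)`, and such a
tuple closes up only if `q = p⁻¹`. -/
theorem morphismProps_map_inv_general {A Q : Type*} {G : DiscGroupoid A Q} {k : ℕ}
    {Ψ : G.Gon k → G.Gon k} (hΨ : MorphismProps G Ψ) {g h : G.Gon k} {l m : Fin k}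
    (hlm : h.1 l = G.inv (g.1 m)) : (Ψ h).1 l = G.inv ((Ψ g).1 m) := by
  match k with
  | 0 => exact l.elim0
  | 1 =>
    have hhg : h.1 l = g.1 m := by rw [hlm, g.2.eq_id_of_fin_one m, G.inv_id]
    rw [hΨ.2 h g l m hhg, (Ψ g).2.eq_id_of_fin_one m, G.inv_id]
  | n + 2 =>
    let p : G.Gon (n + 2) := ⟨G.padPair n (g.1 m) (G.inv (g.1 m)), G.isGon_padPair_iff.2 rfl⟩
    calc (Ψ h).1 l = (Ψ p).1 1 := hΨ.2 h p l 1 hlm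
      _ = G.inv ((Ψ p).1 0) := hΨ.map_padPair_inv rfl
      _ = G.inv ((Ψ g).1 m) := by rw [hΨ.2 g p m 0 rfl]

/-- A map `Ψ : 𝔾^k → 𝔾^k` (`k ≥ 3`) satisfying the morphism properties commutes
with inversion of `k`-gons: `Ψ ([g]⁻¹) = (Ψ [g])⁻¹`, where the inverse `k`-gon
of `[g]` is represented by any `k`-gon whose underlying tuple is
`(g_k⁻¹, …, g₁⁻¹)`. -/
theorem morphismProps_map_inv {A Q : Type*} (G : DiscGroupoid A Q) (k : ℕ)
    (hk : 3 ≤ k) (Ψ : G.Gon k → G.Gon k) (hΨ : MorphismProps G Ψ)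
    (g ginv : G.Gon k) (hginv : ginv.1 = G.invTuple g.1) :
    (Ψ ginv).1 = G.invTuple (Ψ g).1 := by
  funext i
  exact morphismProps_map_inv_general hΨ (congrFun hginv i)
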